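/- Let G be a finite subgroup of the orthogonal group O_n(ℝ). Then a ring homomorphism φ: ℝ[X]^G → ℝ extends to a ring homomorphism ℝ[X] → ℝ if and only if φ(∑_{j=1}^n (∂f/∂X_j)²) ≥ 0 for every f ∈ ℝ[X]^G. (Here, since G acts by orthogonal matrices, the polynomial ∑_{j=1}^n (∂f/∂X_j)² is again G-invariant for every G-invariant f, so φ may be applied to it.) -/

import Mathlib

open MvPolynomial

/-- The action of `σ ∈ GL_n(ℝ)` on real polynomials, `(σ · p)(x) = p(σ⁻¹ x)`,
given by substituting `X i ↦ ∑ j (σ⁻¹)_{i j} X j`. -/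
noncomputable def polyAct {n : ℕ} (σ : Matrix.GeneralLinearGroup (Fin n) ℝ) :
    MvPolynomial (Fin n) ℝ →ₐ[ℝ] MvPolynomial (Fin n) ℝ :=
  aeval fun i => ∑ j, (σ⁻¹).val i j • X j

/-- The subalgebra `ℝ[X]^G` of `G`-invariant polynomials. -/
noncomputable def invariants {n : ℕ} (G : Subgroup (Matrix.GeneralLinearGroup (Fin n) ℝ)) :
    Subalgebra ℝ (MvPolynomial (Fin n) ℝ) where
  carrier := {p | ∀ σ ∈ G, polyAct σ p = p}
  mul_mem' := fun hp hq σ hσ => by rw [map_mul, hp σ hσ, hq σ hσ]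
  one_mem' := fun σ _ => map_one (polyAct σ)
  add_mem' := fun hp hq σ hσ => by rw [map_add, hp σ hσ, hq σ hσ]
  zero_mem' := fun σ _ => map_zero (polyAct σ)
  algebraMap_mem' := fun r σ _ => (polyAct σ).commutes r

/-- The Reynolds operator `R_H(p) = (1/|H|) ∑_{σ ∈ H} σ · p` of a (finite) subgroup `H`. -/
noncomputable def reynolds {n : ℕ} (H : Subgroup (Matrix.GeneralLinearGroup (Fin n) ℝ))
    (p : MvPolynomial (Fin n) ℝ) : MvPolynomial (Fin n) ℝ :=
  (Nat.card H : ℝ)⁻¹ • ∑ᶠ σ ∈ (H : Set (Matrix.GeneralLinearGroup (Fin n) ℝ)), polyAct σ p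

/-- The `G`-invariant polynomial `∑_{j=1}^n (∂f/∂X_j)²`. -/
noncomputable def gradSq {n : ℕ} (f : MvPolynomial (Fin n) ℝ) : MvPolynomial (Fin n) ℝ :=
  ∑ j, (pderiv j f) ^ 2

theorem polyAct_X {n : ℕ} (σ : Matrix.GeneralLinearGroup (Fin n) ℝ) (i : Fin n) :
    polyAct σ (X i) = ∑ j, (σ⁻¹).val i j • X j := by
  simp [polyAct]

theorem polyAct_one {n : ℕ} :
    polyAct (1 : Matrix.GeneralLinearGroup (Fin n) ℝ) = AlgHom.id ℝ _ := by
  ext1 i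
  simp [polyAct_X, Matrix.one_apply]

theorem polyAct_mul_apply {n : ℕ} (σ τ : Matrix.GeneralLinearGroup (Fin n) ℝ)
    (p : MvPolynomial (Fin n) ℝ) : polyAct (σ * τ) p = polyAct σ (polyAct τ p) := by
  suffices h : polyAct (σ * τ) = (polyAct σ).comp (polyAct τ) from DFunLike.congr_fun h p
  ext1 i
  simp only [AlgHom.comp_apply, polyAct_X, map_sum, map_smul, Finset.smul_sum, mul_inv_rev,
    Units.val_mul, Matrix.mul_apply, Finset.sum_smul, smul_smul]
  exact Finset.sum_comm

/-- The action of a matrix group on polynomials by `polyAct`. -/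
noncomputable abbrev polyMulSemiringAction {n : ℕ}
    (G : Subgroup (Matrix.GeneralLinearGroup (Fin n) ℝ)) :
    MulSemiringAction G (MvPolynomial (Fin n) ℝ) where
  smul σ p := polyAct σ.1 p
  one_smul p := by
    change polyAct (1 : Matrix.GeneralLinearGroup (Fin n) ℝ) p = p
    exact DFunLike.congr_fun (polyAct_one (n := n)) p
  mul_smul σ τ p := polyAct_mul_apply σ.1 τ.1 p
  smul_zero σ := map_zero (polyAct σ.1)
  smul_add σ := map_add (polyAct σ.1)
  smul_one σ := map_one (polyAct σ.1)
  smul_mul σ := map_mul (polyAct σ.1)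

theorem isIntegral_invariants {n : ℕ} (G : Subgroup (Matrix.GeneralLinearGroup (Fin n) ℝ))
    [Finite G] : Algebra.IsIntegral (invariants G) (MvPolynomial (Fin n) ℝ) := by
  let := polyMulSemiringAction G
  have : SMulCommClass G (invariants G) (MvPolynomial (Fin n) ℝ) :=
    ⟨fun σ a p => by
      change polyAct σ.1 (a.1 * p) = a.1 * polyAct σ.1 p
      rw [map_mul, a.2 σ.1 σ.2]⟩
  have : Algebra.IsInvariant (invariants G) (MvPolynomial (Fin n) ℝ) G :=
    ⟨fun p hp => ⟨⟨p, fun σ hσ => hp ⟨σ, hσ⟩⟩, rfl⟩⟩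
  exact Algebra.IsInvariant.isIntegral _ _ G

/-- A character of a subalgebra extends along an integral extension to a character with values in
an algebraically closed field. -/
theorem exists_algHom_extension {k K B : Type*} [Field k] [Field K] [Algebra k K] [IsAlgClosed K]
    [CommRing B] [Algebra k B] (A : Subalgebra k B) [Algebra.IsIntegral A B] (φ : A →ₐ[k] k) :
    ∃ ψ : B →ₐ[k] K, ∀ a : A, ψ a = algebraMap k K (φ a) := by
  obtain ⟨Q, hQ, hQφ⟩ := Ideal.exists_ideal_over_maximal_of_isIntegral (S := B)
    (P_max := RingHom.ker_isMaximal_of_surjective φ fun c => ⟨algebraMap k A c, φ.commutes c⟩)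
    (RingHom.ker φ) (by
      rw [(RingHom.injective_iff_ker_eq_bot (algebraMap A B)).1 Subtype.val_injective]
      exact bot_le)
  have hmk : ∀ a : A, Ideal.Quotient.mkₐ k Q a = algebraMap k (B ⧸ Q) (φ a) := by
    intro a
    have h : a - algebraMap k A (φ a) ∈ Q.comap (algebraMap A B) := by
      rw [hQφ, RingHom.mem_ker]
      simp
    rw [Ideal.mem_comap] at h
    have h' := Ideal.Quotient.eq_zero_iff_mem.2 h
    rw [map_sub, map_sub, sub_eq_zero] at h'
    exact h'
  have hint : Algebra.IsIntegral k (B ⧸ Q) := by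
    refine ⟨fun y => ?_⟩
    obtain ⟨b, rfl⟩ := Ideal.Quotient.mk_surjective y
    obtain ⟨p, hp, hpb⟩ := Algebra.IsIntegral.isIntegral (R := A) b
    refine ⟨p.map (φ : A →+* k), hp.map _, ?_⟩
    have hcomp : (algebraMap k (B ⧸ Q)).comp (φ : A →+* k) =
        (Ideal.Quotient.mk Q).comp (algebraMap A B) := RingHom.ext fun a => (hmk a).symm
    rw [Polynomial.eval₂_map, hcomp, ← Polynomial.hom_eval₂, hpb, map_zero]
  refine ⟨(IsAlgClosed.lift : B ⧸ Q →ₐ[k] K).comp (Ideal.Quotient.mkₐ k Q), fun a => ?_⟩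
  rw [AlgHom.comp_apply, hmk, AlgHom.commutes]

theorem pderiv_polyAct {n : ℕ} (σ : Matrix.GeneralLinearGroup (Fin n) ℝ) (j : Fin n)
    (p : MvPolynomial (Fin n) ℝ) :
    pderiv j (polyAct σ p) = ∑ i, (σ⁻¹).val i j • polyAct σ (pderiv i p) := by
  induction p using MvPolynomial.induction_on with
  | C a => simp [← algebraMap_eq]
  | add p q hp hq => simp only [map_add, hp, hq, smul_add, Finset.sum_add_distrib]
  | mul_X p k hp =>
    have hX : pderiv j (polyAct σ (X k)) = C ((σ⁻¹).val k j) := by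
      simp [polyAct_X, pderiv_X, Pi.single_apply, smul_eq_C_mul]
    simp only [map_mul, pderiv_mul, hp, hX, pderiv_X, map_add, smul_add, Finset.sum_add_distrib,
      Finset.sum_mul, smul_mul_assoc, Pi.single_apply]
    congr 1
    simp [apply_ite, smul_eq_C_mul, mul_comm]

theorem gradSq_mem_invariants {n : ℕ} {G : Subgroup (Matrix.GeneralLinearGroup (Fin n) ℝ)}
    (hO : ∀ σ ∈ G, σ.val.transpose * σ.val = (1 : Matrix (Fin n) (Fin n) ℝ))
    {f : MvPolynomial (Fin n) ℝ} (hf : f ∈ invariants G) : gradSq f ∈ invariants G := by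
  intro σ hσ
  have horth : (σ⁻¹).val * (σ⁻¹).val.transpose = 1 := by
    have h : (σ⁻¹).val = σ.val.transpose := by
      have h1 : σ.val * (σ⁻¹).val = 1 := by rw [← Units.val_mul, mul_inv_cancel, Units.val_one]
      rw [← one_mul (σ⁻¹).val, ← hO σ hσ, mul_assoc, h1, mul_one]
    rw [h, Matrix.transpose_transpose, hO σ hσ]
  have hgrad : ∀ j, pderiv j f = ∑ i, (σ⁻¹).val i j • polyAct σ (pderiv i f) := fun j => by
    conv_lhs => rw [← hf σ hσ]
    exact pderiv_polyAct σ j f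
  have horth' : ∀ i k, ∑ j, (σ⁻¹).val i j * (σ⁻¹).val k j = if i = k then 1 else 0 := fun i k => by
    simpa [Matrix.mul_apply, Matrix.one_apply] using congr_fun₂ horth i k
  symm
  calc gradSq f = ∑ j, (∑ i, (σ⁻¹).val i j • polyAct σ (pderiv i f)) ^ 2 :=
        Finset.sum_congr rfl fun j _ => by rw [← hgrad j]
    _ = ∑ i, ∑ k, (∑ j, (σ⁻¹).val i j * (σ⁻¹).val k j) •
          (polyAct σ (pderiv i f) * polyAct σ (pderiv k f)) := by
        simp only [sq, Finset.sum_mul_sum, smul_mul_smul_comm, Finset.sum_smul]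
        rw [Finset.sum_comm]
        exact Finset.sum_congr rfl fun i _ => Finset.sum_comm
    _ = polyAct σ (gradSq f) := by
        simp only [horth', gradSq, sq, map_sum, map_mul, ite_smul, one_smul, zero_smul,
          Finset.sum_ite_eq, Finset.mem_univ, if_true]

theorem sum_polyAct_mem_invariants {n : ℕ} (G : Subgroup (Matrix.GeneralLinearGroup (Fin n) ℝ))
    [Fintype G] (p : MvPolynomial (Fin n) ℝ) : ∑ σ : G, polyAct σ.1 p ∈ invariants G := by
  intro τ hτ
  simp only [map_sum, ← polyAct_mul_apply]
  exact Fintype.sum_equiv (Equiv.mulLeft (⟨τ, hτ⟩ : G)) (fun σ => polyAct (τ * σ.1) p)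
    (fun σ => polyAct σ.1 p) fun σ => by rw [Equiv.coe_mulLeft, Subgroup.coe_mul]

theorem Polynomial.exists_derivative_eq {k : Type*} [Field k] [CharZero k] (q : Polynomial k) :
    ∃ p : Polynomial k, p.derivative = q := by
  induction q using Polynomial.induction_on' with
  | add p q hp hq =>
    obtain ⟨a, rfl⟩ := hp
    obtain ⟨b, rfl⟩ := hq
    exact ⟨a + b, Polynomial.derivative_add⟩
  | monomial m c =>
    refine ⟨Polynomial.monomial (m + 1) (c / (m + 1)), ?_⟩
    have : (m + 1 : k) ≠ 0 := Nat.cast_add_one_ne_zero m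
    rw [Polynomial.derivative_monomial]
    simp [this]

/-- A real polynomial whose value at each `t ∈ S` is `0` or `i Im t`, the latter at `s`. -/
theorem exists_real_polynomial_aeval_eq_I_mul_im {s : ℂ} (hs : s.im ≠ 0) (S : Finset ℂ) :
    ∃ q : Polynomial ℝ, Polynomial.aeval s q = Complex.I * s.im ∧
      ∀ t ∈ S, Polynomial.aeval t q = 0 ∨ Polynomial.aeval t q = Complex.I * t.im := by
  classical
  set F : ℂ → Polynomial ℝ := fun t => Polynomial.X ^ 2 - Polynomial.C (2 * t.re) * Polynomial.X +
    Polynomial.C (t.re ^ 2 + t.im ^ 2) with hF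
  have hFval : ∀ t u : ℂ, Polynomial.aeval u (F t) = (u - t) * (u - (starRingEnd ℂ) t) := by
    intro t u
    simp only [hF, map_add, map_sub, map_mul, map_pow, Polynomial.aeval_X, Polynomial.aeval_C,
      Complex.coe_algebraMap]
    apply Complex.ext <;> simp [sq] <;> ring
  set T := S.filter fun t => t ≠ s ∧ t ≠ (starRingEnd ℂ) s with hT
  set r := ∏ t ∈ T, F t with hr
  have hrs : Polynomial.aeval s r ≠ 0 := by
    rw [hr, map_prod, Finset.prod_ne_zero_iff]
    intro t ht
    obtain ⟨-, h1, h2⟩ := Finset.mem_filter.1 ht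
    rw [hFval]
    refine mul_ne_zero (sub_ne_zero.2 h1.symm) (sub_ne_zero.2 fun h => h2 ?_)
    rw [h, Complex.conj_conj]
  set c := Complex.I * s.im / Polynomial.aeval s r with hc
  set β := c.im / s.im with hβ
  set q := r * (Polynomial.C (c.re - β * s.re) + Polynomial.C β * Polynomial.X) with hq
  have hqs : Polynomial.aeval s q = Complex.I * s.im := by
    have h : Polynomial.aeval s (Polynomial.C (c.re - β * s.re) + Polynomial.C β * Polynomial.X) =
        c := by
      simp only [map_add, map_mul, Polynomial.aeval_X, Polynomial.aeval_C, Complex.coe_algebraMap]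
      apply Complex.ext
      · simp
      · simp [hβ, hs]
    rw [hq, map_mul, h, hc, mul_div_cancel₀ _ hrs]
  refine ⟨q, hqs, fun t ht => ?_⟩
  by_cases h1 : t = s
  · exact Or.inr (h1 ▸ hqs)
  by_cases h2 : t = (starRingEnd ℂ) s
  · right
    rw [h2, Polynomial.aeval_conj, hqs]
    simp
  · left
    have : Polynomial.aeval t r = 0 := by
      rw [hr, map_prod]
      refine Finset.prod_eq_zero (Finset.mem_filter.2 ⟨ht, h1, h2⟩) ?_
      rw [hFval, sub_self, zero_mul]
    rw [hq, map_mul, this, zero_mul]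

theorem pderiv_aeval_polyAct_X {n : ℕ} (σ : Matrix.GeneralLinearGroup (Fin n) ℝ) (j k : Fin n)
    (H : Polynomial ℝ) :
    pderiv k (Polynomial.aeval (polyAct σ (X j)) H) =
      (σ⁻¹).val j k • Polynomial.aeval (polyAct σ (X j)) H.derivative := by
  rw [Derivation.map_aeval]
  simp [pderiv_polyAct, pderiv_X, Pi.single_apply, apply_ite, smul_eq_C_mul, mul_comm]

/-- If a complex character takes nonnegative real values on `∑ⱼ (∂f/∂Xⱼ)²` for invariant `f`,
then it takes real values on the coordinates. -/
theorem im_algHom_X_eq_zero {n : ℕ} (G : Subgroup (Matrix.GeneralLinearGroup (Fin n) ℝ)) [Finite G]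
    (ψ : MvPolynomial (Fin n) ℝ →ₐ[ℝ] ℂ)
    (hψ : ∀ f ∈ invariants G, 0 ≤ (ψ (gradSq f)).re) (j : Fin n) : (ψ (X j)).im = 0 := by
  classical
  by_contra hs
  cases nonempty_fintype G
  set z : G → ℂ := fun σ => ψ (polyAct σ.1 (X j)) with hz
  obtain ⟨q, hqs, hqS⟩ := exists_real_polynomial_aeval_eq_I_mul_im hs (Finset.univ.image z)
  obtain ⟨H, rfl⟩ := Polynomial.exists_derivative_eq q
  have hε : ∀ σ, ∃ ε : ℝ, Polynomial.aeval (z σ) H.derivative = Complex.I * ε ∧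
      ε * (z σ).im = ε ^ 2 := by
    intro σ
    rcases hqS (z σ) (Finset.mem_image_of_mem _ (Finset.mem_univ σ)) with h | h
    · exact ⟨0, by simp [h], by simp⟩
    · exact ⟨(z σ).im, h, (sq _).symm⟩
  choose ε hε hεz using hε
  set w : Fin n → ℝ := fun k => ∑ σ : G, ε σ * (σ.1⁻¹).val j k with hw
  have hderiv : ∀ k, ψ (pderiv k (∑ σ : G, polyAct σ.1 (Polynomial.aeval (X j) H))) =
      Complex.I * w k := by
    intro k
    simp only [map_sum, pderiv_aeval_polyAct_X, map_smul,
      ← Polynomial.aeval_algHom_apply]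
    simp only [hw, Complex.ofReal_sum, Finset.mul_sum, Complex.ofReal_mul]
    refine Finset.sum_congr rfl fun σ _ => ?_
    rw [hε, Complex.real_smul]
    ring
  have hpos := hψ _ (sum_polyAct_mem_invariants G (Polynomial.aeval (X j) H))
  have hw0 : ∀ k, w k = 0 := by
    have h : ∑ k, w k ^ 2 ≤ 0 := by
      rw [gradSq, map_sum, Complex.re_sum] at hpos
      simp only [map_pow, hderiv] at hpos
      simpa [mul_pow, ← Complex.ofReal_pow] using hpos
    intro k
    have := (Finset.sum_eq_zero_iff_of_nonneg fun k _ => sq_nonneg (w k)).1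
      (h.antisymm (Finset.sum_nonneg fun k _ => sq_nonneg (w k))) k (Finset.mem_univ k)
    exact pow_eq_zero_iff two_ne_zero |>.1 this
  have hzim : ∀ σ : G, (z σ).im = ∑ k, (σ.1⁻¹).val j k * (ψ (X k)).im := by
    intro σ
    simp [hz, polyAct_X]
  have hsum : ∑ σ, ε σ ^ 2 = 0 := by
    calc ∑ σ, ε σ ^ 2 = ∑ σ : G, ∑ k, ε σ * (σ.1⁻¹).val j k * (ψ (X k)).im := by
          refine Finset.sum_congr rfl fun σ _ => ?_
          rw [← hεz, hzim, Finset.mul_sum]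
          exact Finset.sum_congr rfl fun k _ => (mul_assoc _ _ _).symm
      _ = ∑ k, w k * (ψ (X k)).im := by
          rw [Finset.sum_comm]
          exact Finset.sum_congr rfl fun k _ => (Finset.sum_mul _ _ _).symm
      _ = 0 := by simp [hw0]
  have hε1 : ε 1 = 0 := pow_eq_zero_iff two_ne_zero |>.1 <|
    (Finset.sum_eq_zero_iff_of_nonneg fun σ _ => sq_nonneg (ε σ)).1 hsum 1 (Finset.mem_univ 1)
  have hz1 : z 1 = ψ (X j) := by simp [hz, polyAct_one]
  have h := hε 1
  rw [hz1, hqs, hε1] at h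
  exact hs (by simpa using h)

/-- for a finite subgroup `G` of the orthogonal group `O_n(ℝ)`, a ring
homomorphism `φ : ℝ[X]^G → ℝ` extends to `ℝ[X]` iff `φ(∑ⱼ (∂f/∂Xⱼ)²) ≥ 0` for all
`f ∈ ℝ[X]^G`. -/
theorem statement_0 {n : ℕ} (hn : 1 ≤ n)
    (G : Subgroup (Matrix.GeneralLinearGroup (Fin n) ℝ)) [Finite G]
    (hO : ∀ σ ∈ G, σ.val.transpose * σ.val = (1 : Matrix (Fin n) (Fin n) ℝ))
    (φ : invariants G →+* ℝ) :
    (∃ ψ : MvPolynomial (Fin n) ℝ →+* ℝ,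
        ∀ (f : MvPolynomial (Fin n) ℝ) (hf : f ∈ invariants G), ψ f = φ ⟨f, hf⟩) ↔
      (∀ (f : MvPolynomial (Fin n) ℝ), f ∈ invariants G →
        ∀ (h : gradSq f ∈ invariants G), 0 ≤ φ ⟨gradSq f, h⟩) := by
  constructor
  · rintro ⟨ψ, hψ⟩ f - h
    rw [← hψ, gradSq, map_sum]
    exact Finset.sum_nonneg fun j _ => by rw [map_pow]; exact sq_nonneg _
  · intro hφ
    have := isIntegral_invariants G
    let φₐ : invariants G →ₐ[ℝ] ℝ :=
      { φ with
        commutes' := fun c =>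
          RingHom.congr_fun (Subsingleton.elim (φ.comp (algebraMap ℝ (invariants G)))
            (RingHom.id ℝ)) c }
    obtain ⟨ψ, hψ⟩ := exists_algHom_extension (K := ℂ) (invariants G) φₐ
    have hreal : ∀ j, (ψ (X j)).im = 0 := im_algHom_X_eq_zero G ψ fun f hf => by
      have h := gradSq_mem_invariants hO hf
      rw [hψ ⟨gradSq f, h⟩]
      exact hφ f hf h
    let ψr : MvPolynomial (Fin n) ℝ →ₐ[ℝ] ℝ := aeval fun j => (ψ (X j)).re
    have hcomp : (Complex.ofRealAm).comp ψr = ψ := by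
      ext1 j
      apply Complex.ext <;> simp [ψr, hreal]
    refine ⟨ψr, fun f hf => Complex.ofReal_injective ?_⟩
    exact (DFunLike.congr_fun hcomp f).trans (hψ ⟨f, hf⟩)
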